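/- Let q be an odd prime power with q ≡ 1 (mod 4). Then for any n ≥ 5 and any a₁, ..., aₙ ∈ F_q \ {0}, there exist points A₁, ..., Aₙ ∈ F_q² such that Q(Aᵢ, A_{i+1}) = aᵢ for all i = 1, ..., n, where A_{n+1} = A₁. -/

import Mathlib

open scoped Classical

def quadrance {F : Type*} [Field F] (A B : F × F) : F :=
  (B.1 - A.1) ^ 2 + (B.2 - A.2) ^ 2

def P5 {F : Type*} [Field F] (a b c d e : F) : Prop :=
  ∃ u v w x y : F, u ≠ 0 ∧ v ≠ 0 ∧ w ≠ 0 ∧ x ≠ 0 ∧ y ≠ 0 ∧ u + v + w + x + y = 0 ∧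
    a / u + b / v + c / w + d / x + e / y = 0

theorem P5_match {F : Type*} [Field F] {a b c d e : F} (ha : a ≠ 0) (hb : b ≠ 0)
    (hc : c ≠ 0) (hd : d ≠ 0) (he : e ≠ 0) (hab : a ≠ b) (hcd : c ≠ d) : P5 a b c d e := by
  have h1 : a - b ≠ 0 := sub_ne_zero.2 hab
  have h2 : c - d ≠ 0 := sub_ne_zero.2 hcd
  -- first pair sums to (1,0), second to (0,e), last is (-1,-e)
  refine ⟨a / (a - b), -b / (a - b), (c - d) / e, -(c - d) / e, -1, ?_, ?_, ?_, ?_, ?_, ?_, ?_⟩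
  · positivity
  · exact div_ne_zero (neg_ne_zero.2 hb) h1
  · positivity
  · exact div_ne_zero (neg_ne_zero.2 h2) he
  · simp
  · field_simp
    ring
  · field_simp
    ring

theorem P5_four {F : Type*} [Field F] {a b i : F} (h20 : (2 : F) ≠ 0) (hi : i * i = -1)
    (ha : a ≠ 0) (hb : b ≠ 0) (hab : a ≠ b) : P5 a a a a b := by
  have h1 : a - b ≠ 0 := sub_ne_zero.2 hab
  have hi0 : i ≠ 0 := by
    rintro rfl
    simp at hi
  have hi1 : i + 1 ≠ 0 := by
    intro h
    apply h20
    linear_combination (-(i - 1)) * h + hi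
  have hp : i ≠ 0 := hi0
  refine ⟨1, i, -i / (i + 1), -(i / (i + 1)) * a / (a - b), (i / (i + 1)) * b / (a - b),
    one_ne_zero, hi0, ?_, ?_, ?_, ?_, ?_⟩
  · exact div_ne_zero (neg_ne_zero.2 hi0) hi1
  · exact div_ne_zero (mul_ne_zero (neg_ne_zero.2 (div_ne_zero hi0 hi1)) ha) h1
  · positivity
  · field_simp
    linear_combination hi * (a - b)
  · field_simp
    ring

theorem P5_one {F : Type*} [Field F] [Fintype F] (h20 : (2 : F) ≠ 0) :
    P5 (1 : F) 1 1 1 1 := by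
  have key : IsSquare (-3 : F) ∨ IsSquare (5 : F) ∨ IsSquare (-15 : F) := by
    by_cases h3 : IsSquare (-3 : F)
    · exact Or.inl h3
    by_cases h5 : IsSquare (5 : F)
    · exact Or.inr (Or.inl h5)
    right; right
    have h30 : (-3 : F) ≠ 0 := by
      intro h; rw [h] at h3; exact h3 (IsSquare.zero)
    have h50 : (5 : F) ≠ 0 := by
      intro h; rw [h] at h5; exact h5 (IsSquare.zero)
    have e3 := quadraticChar_neg_one_iff_not_isSquare.2 h3
    have e5 := quadraticChar_neg_one_iff_not_isSquare.2 h5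
    have : (-15 : F) = (-3) * 5 := by norm_num
    rw [this, ← quadraticChar_one_iff_isSquare (mul_ne_zero h30 h50), map_mul, e3, e5]
    norm_num
  rcases key with ⟨s, hs⟩ | ⟨s, hs⟩ | ⟨s, hs⟩
  · have h : ∃ t : F, t * t + t + 1 = 0 := ⟨(-1 + s) / 2, by
      field_simp; linear_combination -hs⟩
    obtain ⟨t, ht⟩ := h
    have ht0 : t ≠ 0 := by rintro rfl; simp at ht
    have ht1 : t + 1 ≠ 0 := by
      intro h; apply one_ne_zero (α := F); linear_combination ht - t * h
    refine ⟨1, -1, 1, t, -(t + 1), by simp, by simp, by simp, ht0, neg_ne_zero.2 ht1, by ring, ?_⟩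
    field_simp
    linear_combination ht
  · have h : ∃ t : F, t * t + 3 * t + 1 = 0 := ⟨(-3 + s) / 2, by
      field_simp; linear_combination -hs⟩
    obtain ⟨t, ht⟩ := h
    have ht0 : t ≠ 0 := by rintro rfl; simp at ht
    have ht1 : t + 3 ≠ 0 := by
      intro h; apply one_ne_zero (α := F); linear_combination ht - t * h
    refine ⟨1, 1, 1, t, -(t + 3), by simp, by simp, by simp, ht0, neg_ne_zero.2 ht1, by ring, ?_⟩
    field_simp
    linear_combination 3 * ht
  · have h : ∃ t : F, 4 * t * t + 7 * t + 4 = 0 := ⟨(-7 + s) / (2 * 2 * 2), by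
      field_simp; linear_combination -4 * hs⟩
    obtain ⟨t, ht⟩ := h
    have ht0 : t ≠ 0 := by
      rintro rfl
      apply mul_ne_zero h20 h20
      linear_combination ht
    have ht1 : t + 1 ≠ 0 := by
      intro h; apply one_ne_zero (α := F); linear_combination ht - (4 * t + 3) * h
    refine ⟨1, 1, t, t, -(2 * (t + 1)), by simp, by simp, ht0, ht0,
      neg_ne_zero.2 (mul_ne_zero h20 ht1), by ring, ?_⟩
    field_simp
    linear_combination ht

theorem P5_const {F : Type*} [Field F] [Fintype F] (h20 : (2 : F) ≠ 0) (a : F) :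
    P5 a a a a a := by
  obtain ⟨u, v, w, x, y, hu, hv, hw, hx, hy, h1, h2⟩ := P5_one h20
  refine ⟨u, v, w, x, y, hu, hv, hw, hx, hy, h1, ?_⟩
  linear_combination a * h2

theorem P5_perm1 {F : Type*} [Field F] {a b c d e : F} (h : P5 a b c d e) : P5 b c d e a := by
  obtain ⟨u, v, w, x, y, hu, hv, hw, hx, hy, h1, h2⟩ := h
  exact ⟨v, w, x, y, u, hv, hw, hx, hy, hu, by linear_combination h1, by linear_combination h2⟩

theorem P5_perm2 {F : Type*} [Field F] {a b c d e : F} (h : P5 a b c d e) : P5 b a c d e := by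
  obtain ⟨u, v, w, x, y, hu, hv, hw, hx, hy, h1, h2⟩ := h
  exact ⟨v, u, w, x, y, hv, hu, hw, hx, hy, by linear_combination h1, by linear_combination h2⟩

theorem P5_all {F : Type*} [Field F] [Fintype F] {a b c d e i : F} (h20 : (2 : F) ≠ 0)
    (hi : i * i = -1) (ha : a ≠ 0) (hb : b ≠ 0) (hc : c ≠ 0) (hd : d ≠ 0) (he : e ≠ 0) :
    P5 a b c d e := by
  by_contra H
  have s34 : ∀ {a b c d e : F}, P5 a b c d e → P5 a b d c e := fun h =>
    P5_perm1 (P5_perm1 (P5_perm1 (P5_perm2 (P5_perm1 (P5_perm1 h)))))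
  have s45 : ∀ {a b c d e : F}, P5 a b c d e → P5 a b c e d := fun h =>
    P5_perm1 (P5_perm1 (P5_perm2 (P5_perm1 (P5_perm1 (P5_perm1 h)))))
  have s23 : ∀ {a b c d e : F}, P5 a b c d e → P5 a c b d e := fun h =>
    P5_perm1 (P5_perm1 (P5_perm1 (P5_perm1 (P5_perm2 (P5_perm1 h)))))
  have m1 : a ≠ b → c = d := fun h => by
    by_contra h'
    exact H (P5_match ha hb hc hd he h h')
  have m2 : a ≠ b → c = e := fun h => by
    by_contra h'
    exact H (s45 (P5_match ha hb hc he hd h h'))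
  have m3 : a ≠ c → b = d := fun h => by
    by_contra h'
    exact H (s23 (P5_match ha hc hb hd he h h'))
  have m4 : a ≠ d → b = c := fun h => by
    by_contra h'
    exact H (s34 (s23 (P5_match ha hd hb hc he h h')))
  have m5 : c ≠ d → a = e := fun h => by
    by_contra h'
    exact H (s23 (s34 (P5_perm2 (s23 (s45 (P5_match hc hd ha he hb h h'))))))
  have four : ∀ {x y : F}, x ≠ 0 → y ≠ 0 → P5 x x x x y := fun {x y} hx hy => by
    by_cases h : x = y
    · subst h; exact P5_const h20 x
    · exact P5_four h20 hi hx hy h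
  by_cases hab : a = b
  · subst hab
    by_cases hcd : c = d
    · subst hcd
      by_cases hac : a = c
      · subst hac
        exact H (four ha he)
      · exact hac (m3 hac)
    · have := m5 hcd
      subst this
      by_cases hac : a = c
      · subst hac
        exact H (s45 (four ha hd))
      · have := m3 hac
        subst this
        exact H (s34 (s45 (four ha hc)))
  · have h1 := m1 hab
    have h2 := m2 hab
    subst h1
    subst h2
    by_cases hac : a = c
    · subst hac
      exact H (s23 (s34 (s45 (four ha hb))))
    · have := m3 hac
      subst this
      exact H (P5_perm2 (s23 (s34 (s45 (four hb ha)))))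

theorem poly_all {F : Type*} [Field F] [Fintype F] {i : F} (h20 : (2 : F) ≠ 0)
    (hi : i * i = -1) (hq : 4 ≤ Fintype.card F) (n : ℕ) (hn : 5 ≤ n) :
    ∀ a : ℕ → F, (∀ k, a k ≠ 0) → ∃ u : ℕ → F, (∀ k, u k ≠ 0) ∧
      ∑ k ∈ Finset.range n, u k = 0 ∧ ∑ k ∈ Finset.range n, a k / u k = 0 := by
  induction n, hn using Nat.le_induction with
  | base =>
    intro a ha
    obtain ⟨u, v, w, x, y, hu, hv, hw, hx, hy, h1, h2⟩ :=
      P5_all h20 hi (ha 0) (ha 1) (ha 2) (ha 3) (ha 4)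
    refine ⟨fun k => if k = 0 then u else if k = 1 then v else if k = 2 then w else
      if k = 3 then x else y, ?_, ?_, ?_⟩
    · intro k
      dsimp only
      split_ifs <;> assumption
    · simp [Finset.sum_range_succ]
      exact h1
    · simp [Finset.sum_range_succ]
      exact h2
  | succ n hn ih =>
    intro a ha
    obtain ⟨m, rfl⟩ : ∃ m, n = m + 1 := ⟨n - 1, by omega⟩
    obtain ⟨t, ht⟩ : ∃ t : F, t ∉ ({0, -1, -(a (m+1) / a m)} : Finset F) := by
      by_contra! h
      have h3 : Fintype.card F ≤ ({0, -1, -(a (m+1) / a m)} : Finset F).card := by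
        rw [← Finset.card_univ]
        exact Finset.card_le_card fun x _ => h x
      have := Finset.card_le_three (a := (0 : F)) (b := -1) (c := -(a (m+1) / a m))
      omega
    simp only [Finset.mem_insert, Finset.mem_singleton, not_or] at ht
    obtain ⟨ht0, ht1, ht2⟩ := ht
    have ht1' : 1 + t ≠ 0 := fun h => ht1 (by linear_combination h)
    have hm := ha m
    have hc : (1 + t) * (a m + a (m+1) / t) ≠ 0 := by
      apply mul_ne_zero ht1'
      intro h
      apply ht2
      field_simp at h ⊢
      linear_combination h
    obtain ⟨u, hu, h1, h2⟩ := ih (fun k => if k = m then (1 + t) * (a m + a (m+1) / t) else a k)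
      (by intro k; split_ifs; exacts [hc, ha k])
    have hum := hu m
    refine ⟨fun k => if k = m then u m / (1 + t) else if k = m + 1 then u m * t / (1 + t)
      else u k, ?_, ?_, ?_⟩
    · intro k
      dsimp only
      split_ifs
      · positivity
      · positivity
      · exact hu k
    · rw [Finset.sum_range_succ, Finset.sum_range_succ]
      rw [Finset.sum_range_succ] at h1
      rw [Finset.sum_congr rfl (g := u)]
      · simp
        have : u m / (1 + t) + u m * t / (1 + t) = u m := by field_simp
        linear_combination h1 + this
      · intro k hk
        have := Finset.mem_range.1 hk
        rw [if_neg (by omega), if_neg (by omega)]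
    · rw [Finset.sum_range_succ, Finset.sum_range_succ]
      rw [Finset.sum_range_succ] at h2
      rw [Finset.sum_congr rfl (g := fun k => a k / u k)]
      · rw [Finset.sum_congr rfl (g := fun k => a k / u k)] at h2
        · simp only [if_true] at h2
          simp only [if_true, Nat.succ_ne_self, if_false]
          have : a m / (u m / (1 + t)) + a (m+1) / (u m * t / (1 + t)) =
            (1 + t) * (a m + a (m+1) / t) / u m := by field_simp
          linear_combination h2 + this
        · intro k hk
          have := Finset.mem_range.1 hk
          rw [if_neg (by omega)]
      · intro k hk
        have := Finset.mem_range.1 hk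
        dsimp only
        rw [if_neg (by omega), if_neg (by omega)]

theorem stmt_13 (F : Type*) [Field F] [Fintype F] (q : ℕ)
    (hcard : Fintype.card F = q) (hodd : Odd q) (h4 : q % 4 = 1)
    (n : ℕ) (hn : 5 ≤ n) (a : ZMod n → F) (ha : ∀ i, a i ≠ 0) :
    ∃ A : ZMod n → F × F, ∀ i : ZMod n, quadrance (A i) (A (i + 1)) = a i := by
  have hq1 : 1 < Fintype.card F := Fintype.one_lt_card
  have hq : 4 ≤ Fintype.card F := by omega
  have h20 : (2 : F) ≠ 0 := by
    apply Ring.two_ne_zero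
    intro h
    have := FiniteField.even_card_of_char_two h
    omega
  obtain ⟨I, hI⟩ : IsSquare (-1 : F) := FiniteField.isSquare_neg_one_iff.2 (by omega)
  have hI0 : I ≠ 0 := by
    rintro rfl
    simp at hI
  obtain ⟨u, hu, h1, h2⟩ := poly_all h20 hI.symm hq n hn (fun k => a (k : ZMod n)) (fun k => ha _)
  haveI : NeZero n := ⟨by omega⟩
  set S : ℕ → F := fun k => ∑ j ∈ Finset.range k, u j with hS
  set T : ℕ → F := fun k => ∑ j ∈ Finset.range k, a (j : ZMod n) / u j with hT
  refine ⟨fun k => ((S k.val + T k.val) / 2, (S k.val - T k.val) / (2 * I)), fun k => ?_⟩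
  have hSk : S (k + 1).val = S k.val + u k.val ∧
      T (k + 1).val = T k.val + a k / u k.val := by
    have e1 : S (k.val + 1) = S k.val + u k.val := Finset.sum_range_succ _ _
    have e2 : T (k.val + 1) = T k.val + a k / u k.val := by
      simp only [hT]
      rw [Finset.sum_range_succ, ZMod.natCast_zmod_val]
    have hlt := ZMod.val_lt k
    rw [← e1, ← e2]
    by_cases h : k.val + 1 < n
    · have : (k + 1).val = k.val + 1 := by
        haveI : Fact (1 < n) := ⟨by omega⟩
        rw [ZMod.val_add_of_lt] <;> rw [ZMod.val_one]
        exact h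
      rw [this]; exact ⟨rfl, rfl⟩
    · have hk : k.val + 1 = n := by omega
      have : k + 1 = 0 := by
        rw [← ZMod.natCast_zmod_val k, ← Nat.cast_one, ← Nat.cast_add, hk, ZMod.natCast_self]
      rw [this, hk, ZMod.val_zero]
      simp only [hS, hT, Finset.range_zero, Finset.sum_empty]
      exact ⟨h1.symm, h2.symm⟩
  have huk := hu k.val
  simp only [quadrance, hSk.1, hSk.2]
  generalize u k.val = x at *
  have : a k = x * (a k / x) := by field_simp
  conv_rhs => rw [this]
  generalize a k / x = y at *
  have e1 : (S k.val + x + (T k.val + y)) / 2 - (S k.val + T k.val) / 2 = (x + y) / 2 := by ring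
  have e2 : (S k.val + x - (T k.val + y)) / (2 * I) - (S k.val - T k.val) / (2 * I)
    = (x - y) / (2 * I) := by ring
  rw [e1, e2]
  have hI2 : I ^ 2 = -1 := by rw [pow_two]; exact hI.symm
  rw [div_pow, div_pow, mul_pow, hI2]
  field_simp
  ring
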